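/- (Clarke's max rule) Let X be a real Banach space, let f₁, …, fₙ : X → ℝ be Lipschitz functions, and define f(x) := max{fᵢ(x) : i = 1, …, n}. For x ∈ X let I(x) := {i : fᵢ(x) = f(x)} be the set of active indices. Then ∂°f(x) ⊆ co{ ⋃_{i ∈ I(x)} ∂°fᵢ(x) }, where co denotes the convex hull in X*. -/

import Mathlib

/-!
Near `x` the maximum `f` is attained only at indices active at `x`.  If `i` is an index attaining
`f (y + t v)`, then `f (y + t v) - f y ≤ fᵢ (y + t v) - fᵢ y`, so
`f°(x; v) ≤ max_{i ∈ I(x)} fᵢ°(x; v)` (`clarkeDeriv_max_le`).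

It remains to see that a functional `ζ` dominated by a finite maximum of sublinear functions `pᵢ`
with `pᵢ ≤ C ‖·‖` is a convex combination of functionals dominated by single `pᵢ`
(`mem_convexHull_of_le_sup`).  This follows from one application of the Hahn–Banach theorem on
`(X × ℝ)ᴵ` with the sublinear function `P (w, r) = maxᵢ (pᵢ wᵢ + rᵢ)`: the functional
`(v, c) ↦ ζ v + c` on the diagonal is dominated by `P`, and an extension dominated by `P` has the
form `(w, r) ↦ ∑ᵢ (Lᵢ wᵢ + λᵢ rᵢ)`.  Restricting to the diagonal gives `∑ Lᵢ = ζ`, `∑ λᵢ = 1`;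
evaluating `P` at `(0, -eᵢ)` gives `λᵢ ≥ 0`, and at `(v, -pᵢ v)` placed in the slot `i` gives
`Lᵢ ≤ λᵢ pᵢ`.  Thus `ζ = ∑ λᵢ (Lᵢ / λᵢ)` over the indices with `λᵢ > 0`.
-/

open Filter Topology Pointwise NNReal

/-- The generalized (Clarke) directional derivative of `f` at `x` in direction `v`:
`f°(x;v) = limsup_{y→x, t↓0} (f(y+tv) − f(y))/t`. -/
noncomputable def clarkeDeriv {X : Type*} [NormedAddCommGroup X] [NormedSpace ℝ X]
    (f : X → ℝ) (x v : X) : ℝ :=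
  Filter.limsup (fun p : X × ℝ => (f (p.1 + p.2 • v) - f p.1) / p.2)
    ((𝓝 x) ×ˢ (𝓝[>] (0 : ℝ)))

/-- The Clarke subdifferential `∂°f(x) = {ζ ∈ X* : ζ(v) ≤ f°(x;v) for all v}`. -/
def clarkeSubdiff {X : Type*} [NormedAddCommGroup X] [NormedSpace ℝ X]
    (f : X → ℝ) (x : X) : Set (X →L[ℝ] ℝ) :=
  {ζ | ∀ v, ζ v ≤ clarkeDeriv f x v}

section Sublinear

/-- The inequality for all `c > 0` gives the reverse one by applying it to `c⁻¹`. -/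
lemma posHom_of_le {E : Type*} [AddCommGroup E] [Module ℝ E] {N : E → ℝ}
    (h : ∀ c : ℝ, 0 < c → ∀ v, N (c • v) ≤ c * N v) (c : ℝ) (hc : 0 < c) (v : E) :
    N (c • v) = c * N v := by
  refine le_antisymm (h c hc v) ?_
  have h1 := h c⁻¹ (inv_pos.2 hc) (c • v)
  rw [inv_smul_smul₀ hc.ne'] at h1
  calc c * N v ≤ c * (c⁻¹ * N (c • v)) := by gcongr
    _ = N (c • v) := by field_simp

/-- The subdifferential at the origin of a finite maximum of sublinear functions is contained in
the convex hull of the subdifferentials. -/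
lemma mem_convexHull_of_le_sup {X : Type*} [NormedAddCommGroup X] [NormedSpace ℝ X]
    {ι : Type*} [Fintype ι] [Nonempty ι] (p : ι → X → ℝ)
    (hhom : ∀ i, ∀ c : ℝ, 0 < c → ∀ v, p i (c • v) = c * p i v)
    (hadd : ∀ i v w, p i (v + w) ≤ p i v + p i w)
    (C : ι → ℝ) (hC : ∀ i v, p i v ≤ C i * ‖v‖) (ζ : X →L[ℝ] ℝ)
    (hζ : ∀ v, ∃ i, ζ v ≤ p i v) :
    ζ ∈ convexHull ℝ (⋃ i, {ξ : X →L[ℝ] ℝ | ∀ v, ξ v ≤ p i v}) := by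
  classical
  have p0 : ∀ i, p i 0 = 0 := fun i => by
    have := hhom i 2 (by norm_num) 0
    rw [smul_zero] at this
    linarith
  let P : (ι → X × ℝ) → ℝ := fun w =>
    Finset.univ.sup' Finset.univ_nonempty (fun i => p i (w i).1 + (w i).2)
  have le_P : ∀ w i, p i (w i).1 + (w i).2 ≤ P w := fun w i =>
    Finset.le_sup' (fun i => p i (w i).1 + (w i).2) (Finset.mem_univ i)
  have P_le : ∀ w a, (∀ i, p i (w i).1 + (w i).2 ≤ a) → P w ≤ a := fun w a h =>
    Finset.sup'_le _ _ fun i _ => h i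
  let i₀ : ι := Classical.arbitrary ι
  let δ : (X × ℝ) →ₗ[ℝ] (ι → X × ℝ) := LinearMap.pi fun _ => LinearMap.id
  let ℓ : (ι → X × ℝ) →ₗ[ℝ] ℝ :=
    ((ζ : X →ₗ[ℝ] ℝ).coprod LinearMap.id).comp (LinearMap.proj i₀)
  let F : (ι → X × ℝ) →ₗ.[ℝ] ℝ := ⟨LinearMap.range δ, ℓ.comp (LinearMap.range δ).subtype⟩
  obtain ⟨g, hgF, hgP⟩ := exists_extension_of_le_sublinear F P
    (posHom_of_le fun c hc w => P_le _ _ fun i => by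
      have := mul_le_mul_of_nonneg_left (le_P w i) hc.le
      simp only [Pi.smul_apply, Prod.smul_fst, Prod.smul_snd, hhom i c hc, smul_eq_mul]
      linarith)
    (fun w z => P_le _ _ fun i => by
      have h1 := le_P w i
      have h2 := le_P z i
      have h3 := hadd i (w i).1 (z i).1
      simp only [Pi.add_apply, Prod.fst_add, Prod.snd_add]
      linarith)
    (by
      rintro ⟨_, ⟨⟨v, c⟩, rfl⟩⟩
      obtain ⟨i, hi⟩ := hζ v
      have := le_P (δ (v, c)) i
      change ζ v + c ≤ _
      refine le_trans ?_ this
      change _ ≤ p i v + c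
      linarith)
  have hdiag : ∀ v c, g (fun _ => (v, c)) = ζ v + c := fun v c => hgF ⟨δ (v, c), ⟨_, rfl⟩⟩
  let L : ι → X →ₗ[ℝ] ℝ := fun i => g.comp ((LinearMap.single ℝ (fun _ => X × ℝ) i).comp
    (LinearMap.inl ℝ X ℝ))
  let lam : ι → ℝ := fun i => g (Pi.single i (0, 1))
  have hsingle : ∀ i v c, g (Pi.single i (v, c)) = L i v + c * lam i := fun i v c => by
    have : (Pi.single i (v, c) : ι → X × ℝ) =
        Pi.single i (v, 0) + c • (Pi.single i (0, 1) : ι → X × ℝ) := by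
      rw [← Pi.single_smul, ← Pi.single_add]
      simp
    rw [this, map_add, map_smul]
    rfl
  have hsum : ∀ v c, ∑ i, (L i v + c * lam i) = ζ v + c := fun v c => by
    rw [← hdiag, ← Finset.univ_sum_single (fun _ : ι => (v, c)), map_sum]
    exact Finset.sum_congr rfl fun i _ => (hsingle i v c).symm
  have hP : ∀ i v c, p i v + c ≤ 0 → L i v + c * lam i ≤ 0 := fun i v c h => by
    rw [← hsingle]
    refine (hgP _).trans (P_le _ _ fun j => ?_)
    rcases eq_or_ne j i with rfl | hji
    · simpa using h
    · simp [Pi.single_eq_of_ne hji, p0]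
  have lam_nonneg : ∀ i, 0 ≤ lam i := fun i => by
    have := hP i 0 (-1) (by rw [p0]; norm_num)
    rw [map_zero] at this
    linarith
  have lam_sum : ∑ i, lam i = 1 := by simpa using hsum 0 1
  have L_le : ∀ i v, L i v ≤ lam i * p i v := fun i v => by
    have := hP i v (-p i v) (by simp)
    linarith
  have L_zero : ∀ i, lam i = 0 → ∀ v, L i v = 0 := fun i hi v => by
    have h1 := L_le i v
    have h2 := L_le i (-v)
    rw [hi, zero_mul] at h1 h2
    rw [map_neg] at h2
    linarith
  have hξ : ∀ i, ∃ ξ : X →L[ℝ] ℝ, (∀ v, lam i * ξ v = L i v) ∧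
      (lam i ≠ 0 → ∀ v, ξ v ≤ p i v) := fun i => by
    by_cases hi : lam i = 0
    · exact ⟨0, fun v => by simp [L_zero i hi v], fun h => absurd hi h⟩
    have hpos : 0 < lam i := lt_of_le_of_ne (lam_nonneg i) (Ne.symm hi)
    have key : ∀ v, ((lam i)⁻¹ • L i) v ≤ p i v := fun v => by
      rw [LinearMap.smul_apply, smul_eq_mul, inv_mul_le_iff₀ hpos]
      exact L_le i v
    refine ⟨((lam i)⁻¹ • L i).mkContinuous (C i) fun v => ?_, fun v => ?_, fun _ v => key v⟩
    · rw [Real.norm_eq_abs, abs_le]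
      have h1 := (key v).trans (hC i v)
      have h2 := (key (-v)).trans (hC i (-v))
      rw [map_neg, norm_neg] at h2
      exact ⟨by linarith, h1⟩
    · change lam i * ((lam i)⁻¹ * L i v) = L i v
      field_simp
  choose ξ hξL hξp using hξ
  have hζeq : ζ = ∑ i with lam i ≠ 0, lam i • ξ i := by
    ext v
    have h := hsum v 0
    simp only [zero_mul, add_zero] at h
    rw [Finset.sum_filter_of_ne (p := fun i => lam i ≠ 0)
      fun i _ h h0 => h (by rw [h0, zero_smul]), ← h]
    simp [hξL]
  rw [hζeq]
  refine (convex_convexHull ℝ _).sum_mem (fun i _ => lam_nonneg i)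
    (by rw [Finset.sum_filter_ne_zero, lam_sum]) fun i hi => ?_
  exact subset_convexHull ℝ _ (Set.mem_iUnion.2 ⟨i, hξp i (Finset.mem_filter.1 hi).2⟩)

end Sublinear

section ClarkeDeriv

variable {X : Type*} [NormedAddCommGroup X] [NormedSpace ℝ X]

lemma abs_quotient_le {f : X → ℝ} {K : ℝ≥0} (hf : LipschitzWith K f) (x v : X) :
    ∀ᶠ q : X × ℝ in 𝓝 x ×ˢ 𝓝[>] (0 : ℝ), |(f (q.1 + q.2 • v) - f q.1) / q.2| ≤ K * ‖v‖ := by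
  have ht : ∀ᶠ q : X × ℝ in 𝓝 x ×ˢ 𝓝[>] (0 : ℝ), 0 < q.2 :=
    tendsto_snd.eventually self_mem_nhdsWithin
  filter_upwards [ht] with q hq
  have h := hf.dist_le_mul (q.1 + q.2 • v) q.1
  rw [Real.dist_eq, dist_eq_norm, add_sub_cancel_left, norm_smul, Real.norm_of_nonneg hq.le] at h
  rw [abs_div, abs_of_pos hq, div_le_iff₀ hq]
  linarith

lemma eventually_quotient_lt {f : X → ℝ} {K : ℝ≥0} (hf : LipschitzWith K f) {x v : X} {b : ℝ}
    (hb : clarkeDeriv f x v < b) :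
    ∀ᶠ q : X × ℝ in 𝓝 x ×ˢ 𝓝[>] (0 : ℝ), (f (q.1 + q.2 • v) - f q.1) / q.2 < b :=
  eventually_lt_of_limsup_lt hb
    ⟨K * ‖v‖, eventually_map.2 <| (abs_quotient_le hf x v).mono fun _ h => (abs_le.1 h).2⟩

lemma clarkeDeriv_le {f : X → ℝ} {K : ℝ≥0} (hf : LipschitzWith K f) {x v : X} {b : ℝ}
    (h : ∀ᶠ q : X × ℝ in 𝓝 x ×ˢ 𝓝[>] (0 : ℝ), (f (q.1 + q.2 • v) - f q.1) / q.2 ≤ b) :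
    clarkeDeriv f x v ≤ b :=
  limsup_le_of_le
    (IsBoundedUnder.isCoboundedUnder_le
      ⟨-(K * ‖v‖), eventually_map.2 <| (abs_quotient_le hf x v).mono fun _ h => (abs_le.1 h).1⟩) h

lemma clarkeDeriv_le_norm {f : X → ℝ} {K : ℝ≥0} (hf : LipschitzWith K f) (x v : X) :
    clarkeDeriv f x v ≤ K * ‖v‖ :=
  clarkeDeriv_le hf <| (abs_quotient_le hf x v).mono fun _ h => (abs_le.1 h).2

lemma clarkeDeriv_smul {f : X → ℝ} {K : ℝ≥0} (hf : LipschitzWith K f) (x : X)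
    (c : ℝ) (hc : 0 < c) (v : X) : clarkeDeriv f x (c • v) = c * clarkeDeriv f x v := by
  refine posHom_of_le (fun c hc v => le_of_forall_pos_le_add fun ε hε => ?_) c hc v
  have hlt : clarkeDeriv f x v < clarkeDeriv f x v + ε / c := by
    have : 0 < ε / c := by positivity
    linarith
  have hscale : Tendsto (fun q : X × ℝ => (q.1, q.2 * c)) (𝓝 x ×ˢ 𝓝[>] (0 : ℝ))
      (𝓝 x ×ˢ 𝓝[>] (0 : ℝ)) := by
    refine tendsto_fst.prodMk ((?_ : Tendsto (fun t : ℝ => t * c) _ _).comp tendsto_snd)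
    refine tendsto_nhdsWithin_iff.2 ⟨?_, ?_⟩
    · exact ((continuous_mul_const c).tendsto' 0 0 (zero_mul c)).mono_left nhdsWithin_le_nhds
    · exact eventually_mem_nhdsWithin.mono fun t ht => mul_pos ht hc
  have ht : ∀ᶠ q : X × ℝ in 𝓝 x ×ˢ 𝓝[>] (0 : ℝ), 0 < q.2 :=
    tendsto_snd.eventually self_mem_nhdsWithin
  refine clarkeDeriv_le hf ?_
  filter_upwards [hscale.eventually (eventually_quotient_lt hf hlt), ht] with q hq hq0
  rw [div_lt_iff₀ (mul_pos hq0 hc)] at hq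
  rw [div_le_iff₀ hq0, smul_smul]
  have : (clarkeDeriv f x v + ε / c) * (q.2 * c) = (c * clarkeDeriv f x v + ε) * q.2 := by
    field_simp
  linarith

lemma clarkeDeriv_add_le {f : X → ℝ} {K : ℝ≥0} (hf : LipschitzWith K f) (x v w : X) :
    clarkeDeriv f x (v + w) ≤ clarkeDeriv f x v + clarkeDeriv f x w := by
  refine le_of_forall_pos_le_add fun ε hε => clarkeDeriv_le hf ?_
  have hv : clarkeDeriv f x v < clarkeDeriv f x v + ε / 2 := by linarith
  have hw : clarkeDeriv f x w < clarkeDeriv f x w + ε / 2 := by linarith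
  -- The increment along `t (v + w)` is split at `y + t w`, which also tends to `x`.
  have hshift : Tendsto (fun q : X × ℝ => (q.1 + q.2 • w, q.2)) (𝓝 x ×ˢ 𝓝[>] (0 : ℝ))
      (𝓝 x ×ˢ 𝓝[>] (0 : ℝ)) := by
    refine Tendsto.prodMk ?_ tendsto_snd
    have : Tendsto (fun q : X × ℝ => q.1 + q.2 • w) (𝓝 (x, 0)) (𝓝 x) :=
      Continuous.tendsto' (by fun_prop) _ _ (by simp)
    rw [nhds_prod_eq] at this
    exact this.mono_left (Filter.prod_mono le_rfl nhdsWithin_le_nhds)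
  filter_upwards [hshift.eventually (eventually_quotient_lt hf hv),
    eventually_quotient_lt hf hw] with q h1 h2
  have heq : q.1 + q.2 • (v + w) = q.1 + q.2 • w + q.2 • v := by
    rw [smul_add]; abel
  rw [heq]
  have : (f (q.1 + q.2 • w + q.2 • v) - f q.1) / q.2 =
      (f (q.1 + q.2 • w + q.2 • v) - f (q.1 + q.2 • w)) / q.2 +
        (f (q.1 + q.2 • w) - f q.1) / q.2 := by ring
  linarith

lemma clarkeDeriv_max_le {ι : Type*} [Fintype ι] [Nonempty ι]
    (f : ι → X → ℝ) (K : ι → ℝ≥0) (hf : ∀ i, LipschitzWith (K i) (f i)) (x v : X) :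
    ∃ i, f i x = Finset.univ.sup' Finset.univ_nonempty (fun j => f j x) ∧
      clarkeDeriv (fun y => Finset.univ.sup' Finset.univ_nonempty (fun i => f i y)) x v ≤
        clarkeDeriv (f i) x v := by
  set M : X → ℝ := fun y => Finset.univ.sup' Finset.univ_nonempty (fun i => f i y) with hM
  have le_M : ∀ i y, f i y ≤ M y := fun i y =>
    Finset.le_sup' (fun i => f i y) (Finset.mem_univ i)
  have M_attained : ∀ y, ∃ i, M y = f i y := fun y => by
    obtain ⟨i, -, hi⟩ := Finset.exists_mem_eq_sup' Finset.univ_nonempty (fun i => f i y)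
    exact ⟨i, hi⟩
  have hMlip : LipschitzWith (∑ i, K i) M := LipschitzWith.of_le_add_mul _ fun y z => by
    obtain ⟨i, hi⟩ := M_attained y
    have h1 := (hf i).le_add_mul y z
    have h2 : (K i : ℝ) ≤ (∑ j, K j : ℝ≥0) := by
      exact_mod_cast Finset.single_le_sum (fun j _ => zero_le (a := K j)) (Finset.mem_univ i)
    have h3 := mul_le_mul_of_nonneg_right h2 (dist_nonneg (x := y) (y := z))
    have h4 := le_M i z
    linarith
  change ∃ i, f i x = M x ∧ clarkeDeriv M x v ≤ clarkeDeriv (f i) x v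
  by_contra! hcon
  -- One `b < f°(x; v)` exceeds the derivatives of all the active functions.
  obtain ⟨b, hbM, hb⟩ : ∃ b < clarkeDeriv M x v, ∀ i, f i x = M x → clarkeDeriv (f i) x v < b := by
    have : ∀ᶠ b in 𝓝[<] clarkeDeriv M x v, ∀ i, f i x = M x → clarkeDeriv (f i) x v < b :=
      eventually_all.2 fun i => by
        by_cases hi : f i x = M x
        · filter_upwards [Ioo_mem_nhdsLT (hcon i hi)] with b hb _ using hb.1
        · exact Eventually.of_forall fun _ h => absurd h hi
    obtain ⟨b, hb, hb'⟩ := (this.and self_mem_nhdsWithin).exists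
    exact ⟨b, hb', hb⟩
  refine absurd (clarkeDeriv_le hMlip ?_) (not_le.2 hbM)
  have hshift : Tendsto (fun q : X × ℝ => q.1 + q.2 • v) (𝓝 x ×ˢ 𝓝[>] (0 : ℝ)) (𝓝 x) := by
    have : Tendsto (fun q : X × ℝ => q.1 + q.2 • v) (𝓝 (x, 0)) (𝓝 x) :=
      Continuous.tendsto' (by fun_prop) _ _ (by simp)
    rw [nhds_prod_eq] at this
    exact this.mono_left (Filter.prod_mono le_rfl nhdsWithin_le_nhds)
  have hact : ∀ᶠ y in 𝓝 x, ∀ i, f i x ≠ M x → f i y < M y := eventually_all.2 fun i => by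
    by_cases hi : f i x = M x
    · exact Eventually.of_forall fun _ h => absurd hi h
    · filter_upwards [(hf i).continuous.continuousAt.eventually_lt hMlip.continuous.continuousAt
        (lt_of_le_of_ne (le_M i x) hi)] with y hy _ using hy
  have hquot : ∀ᶠ q : X × ℝ in 𝓝 x ×ˢ 𝓝[>] (0 : ℝ), ∀ i, f i x = M x →
      (f i (q.1 + q.2 • v) - f i q.1) / q.2 < b := eventually_all.2 fun i => by
    by_cases hi : f i x = M x
    · filter_upwards [eventually_quotient_lt (hf i) (hb i hi)] with q hq _ using hq
    · exact Eventually.of_forall fun _ h => absurd h hi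
  have ht : ∀ᶠ q : X × ℝ in 𝓝 x ×ˢ 𝓝[>] (0 : ℝ), 0 < q.2 :=
    tendsto_snd.eventually self_mem_nhdsWithin
  filter_upwards [hshift.eventually hact, hquot, ht] with q h1 h2 h3
  obtain ⟨i, hi⟩ := M_attained (q.1 + q.2 • v)
  have hix : f i x = M x := by
    by_contra h
    exact (h1 i h).ne' hi
  refine le_trans ?_ (h2 i hix).le
  rw [hi]
  have := le_M i q.1
  gcongr

end ClarkeDeriv

/-- Clarke's max rule: for a finite family of Lipschitz functions and the pointwise max
`f`, `∂°f(x) ⊆ co{⋃_{i active} ∂°fᵢ(x)}`. -/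
theorem clarkeSubdiff_max_subset_convexHull
    {X : Type*} [NormedAddCommGroup X] [NormedSpace ℝ X] [CompleteSpace X]
    {ι : Type*} [Fintype ι] [Nonempty ι]
    (f : ι → X → ℝ) (K : ι → ℝ≥0) (hf : ∀ i, LipschitzWith (K i) (f i)) (x : X) :
    clarkeSubdiff (fun y => Finset.univ.sup' Finset.univ_nonempty (fun i => f i y)) x ⊆
      convexHull ℝ (⋃ i ∈ {i : ι |
          f i x = Finset.univ.sup' Finset.univ_nonempty (fun j => f j x)},
        clarkeSubdiff (f i) x) := by
  classical
  intro ζ hζ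
  set A : Set ι := {i : ι | f i x = Finset.univ.sup' Finset.univ_nonempty (fun j => f j x)}
  have hle : ∀ v, ∃ i : A, ζ v ≤ clarkeDeriv (f i) x v := fun v => by
    obtain ⟨i, hi, h⟩ := clarkeDeriv_max_le f K hf x v
    exact ⟨⟨i, hi⟩, (hζ v).trans h⟩
  have : Nonempty A := (hle 0).nonempty
  rw [Set.biUnion_eq_iUnion]
  exact mem_convexHull_of_le_sup (fun (i : A) v => clarkeDeriv (f i) x v)
    (fun i => clarkeDeriv_smul (hf i) x) (fun i => clarkeDeriv_add_le (hf i) x)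
    (fun i => K i) (fun i => clarkeDeriv_le_norm (hf i) x) ζ hle
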